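/- arXiv:2509.02162 — 3 statements merged into one kernel-verified Lean document; each statement's English description precedes it below -/
import Mathlib

section
/- Let n ≥ 2, let H be a hyperplane in ℝⁿ, and let ∂ ∈ 𝒥_H(𝒦ⁿₙ) with associated contraction φ_∂. If φ_∂ ∉ ℐ, then ∂ cannot be weakly approximated on 𝒦ⁿₙ by finite compositions of polarizations with respect to hyperplanes parallel to H; that is, it is not the case that for every K ∈ 𝒦ⁿₙ there exist finite compositions ∂_{K,k} of polarizations with respect to hyperplanes parallel to H such that ‖1_{∂_{K,k} K} − 1_{∂K}‖_{L¹} → 0 as k → ∞. -/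
open MeasureTheory Metric Filter Topology
open scoped RealInnerProductSpace

noncomputable section

abbrev Euc (n : ℕ) : Type := EuclideanSpace ℝ (Fin n)

/-- `A` is essentially contained in `B` (up to a set of measure zero). -/
def essSub {n : ℕ} (A B : Set (Euc n)) : Prop := volume (A \ B) = 0

/-- `A` is essentially equal to `B` (up to a set of measure zero). -/
def essEq {n : ℕ} (A B : Set (Euc n)) : Prop := volume ((A \ B) ∪ (B \ A)) = 0

/-- The symmetric difference of two sets. -/
def sd {n : ℕ} (A B : Set (Euc n)) : Set (Euc n) := (A \ B) ∪ (B \ A)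

/-- A convex body: a compact convex set with nonempty interior. -/
def isConvexBody {n : ℕ} (A : Set (Euc n)) : Prop :=
  IsCompact A ∧ Convex ℝ A ∧ (interior A).Nonempty

/-- The infinite spherical cylinder of radius `ρ` whose axis passes through `c`
in direction `u`. -/
def cyl {n : ℕ} (u c : Euc n) (ρ : ℝ) : Set (Euc n) :=
  {y | ‖(y - c) - ⟪y - c, u⟫ • u‖ ≤ ρ}

/-- Membership in `𝒥_H(𝒦ⁿₙ)`: a map on convex bodies, with values in `𝓛ⁿ`, that is
monotonic, measure preserving, maps balls to balls, and respects `H`-cylinders,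
where `H` is a hyperplane with unit normal `u`. -/
def inJH {n : ℕ} (u : Euc n) (D : Set (Euc n) → Set (Euc n)) : Prop :=
  (∀ A : Set (Euc n), isConvexBody A → MeasurableSet (D A) ∧ volume (D A) ≠ ⊤) ∧
  (∀ A B : Set (Euc n), isConvexBody A → isConvexBody B →
      essSub A B → essSub (D A) (D B)) ∧
  (∀ A : Set (Euc n), isConvexBody A → volume (D A) = volume A) ∧
  (∀ A : Set (Euc n), isConvexBody A →
      (∃ (x : Euc n) (r : ℝ), 0 < r ∧ essEq A (closedBall x r)) →
      ∃ (x' : Euc n) (r' : ℝ), 0 < r' ∧ essEq (D A) (closedBall x' r')) ∧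
  (∀ A : Set (Euc n), isConvexBody A → ∀ (c : Euc n) (ρ : ℝ), 0 < ρ →
      essSub A (cyl u c ρ) → essSub (D A) (cyl u c ρ))

/-- `φ` is the contraction associated with `D` (with respect to the direction `u`):
`∂B(x + tu, r) = B(x + φ(t)u, r)`, essentially. -/
def assocContr {n : ℕ} (u : Euc n) (D : Set (Euc n) → Set (Euc n)) (φ : ℝ → ℝ) : Prop :=
  LipschitzWith 1 φ ∧ ∀ x : Euc n, ⟪x, u⟫ = 0 → ∀ t r : ℝ, 0 < r →
    essEq (D (closedBall (x + t • u) r)) (closedBall (x + φ t • u) r)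

/-- Convergence `∂_k → ∂` on the convex bodies, in the `L¹` sense of indicator functions. -/
def convOnK {n : ℕ} (Dk : ℕ → Set (Euc n) → Set (Euc n))
    (D : Set (Euc n) → Set (Euc n)) : Prop :=
  ∀ K : Set (Euc n), isConvexBody K →
    Tendsto (fun k => volume (sd (Dk k K) (D K))) atTop (𝓝 0)

/-- The polarization of `A` with respect to the oriented hyperplane `{x : ⟪x,v⟫ = c}` whose
positive closed halfspace is `{x : ⟪x,v⟫ ≥ c}`:
`(P_G A) ∩ G⁺ = (A ∪ A†) ∩ G⁺` and `(P_G A) ∩ G⁻ = (A ∩ A†) ∩ G⁻`,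
where `†` denotes reflection in the hyperplane. -/
def polzn {n : ℕ} (v : Euc n) (c : ℝ) (A : Set (Euc n)) : Set (Euc n) :=
  {x | c ≤ ⟪x, v⟫ ∧ (x ∈ A ∨ x - (2 * (⟪x, v⟫ - c)) • v ∈ A)} ∪
  {x | ⟪x, v⟫ ≤ c ∧ x ∈ A ∧ x - (2 * (⟪x, v⟫ - c)) • v ∈ A}

/-- The class `ℐ` of contractions `φ : ℝ → ℝ` such that whenever `a < b` and `φ(s)` lies in
the open interval with endpoints `φ(a)` and `φ(b)` for every `s ∈ (a,b)`, then
`|φ(b) − φ(a)| = b − a`. -/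
def memI (φ : ℝ → ℝ) : Prop :=
  LipschitzWith 1 φ ∧ ∀ a b : ℝ, a < b →
    (∀ s ∈ Set.Ioo a b, φ s ∈ Set.Ioo (min (φ a) (φ b)) (max (φ a) (φ b))) →
    |φ b - φ a| = b - a

/-- `D` is a finite composition of polarizations with respect to hyperplanes parallel to
the hyperplane with unit normal `u` (with either orientation). -/
def isPolCompParallel {n : ℕ} (u : Euc n) (D : Set (Euc n) → Set (Euc n)) : Prop :=
  ∃ l : List (Euc n × ℝ), l ≠ [] ∧ (∀ p ∈ l, p.1 = u ∨ p.1 = -u) ∧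
    D = (l.map fun p => polzn p.1 p.2).foldr (· ∘ ·) id

/-!
The class `ℐ` contains the identity and is stable under negation and under the folds
`ψ ↦ |ψ - c| + c`, which are the contractions of the polarizations parallel to `H`; hence it
contains the contraction of every finite composition of them. It is also closed under locally
uniform limits. So it is enough to show that weak approximation of `∂` by such compositions `∂ₖ`
brings their contractions `ψₖ` close to `φ`, uniformly on bounded intervals.

To see this, let `K` be a slanted slab of half-thickness `r` and small slope. Monotonicity, applied
to the balls of radius `r` centred on the mid-plane of `K`, forces `∂K` to contain a tube around a
graph determined by `φ`, and `∂ₖK` to contain the corresponding tube for `ψₖ`. As the slope tends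
to zero, the volume of `K` exceeds that of a tube by a vanishing proportion. If `ψₖ` is somewhere
`r`-far from `φ`, the second tube has a definite proportion of its volume outside the first one, so
`∂K ∪ ∂ₖK` is larger than `K` by a definite amount; but `∂` preserves volume and
`∂K ∪ ∂ₖK` differs from `∂K` by arbitrarily little.
-/

section IntervalExtrema

theorem exists_isGreatest_isMinOn {α β : Type*} [LinearOrder α] [TopologicalSpace α]
    [OrderClosedTopology α] [LinearOrder β] [TopologicalSpace β] [OrderClosedTopology β]
    {K : Set α} (hK : IsCompact K) (hne : K.Nonempty) {ψ : α → β} (hψ : Continuous ψ) :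
    ∃ m, IsGreatest {x ∈ K | IsMinOn ψ K x} m := by
  obtain ⟨m₀, hm₀K, hm₀⟩ := hK.exists_isMinOn hne hψ.continuousOn
  have heq : {x ∈ K | IsMinOn ψ K x} = K ∩ {x | ψ x ≤ ψ m₀} := by
    ext x
    exact and_congr_right fun _ =>
      ⟨fun hx => hx hm₀K, fun hx y hy => le_trans hx (hm₀ hy)⟩
  rw [heq]
  exact (hK.inter_right (isClosed_le hψ continuous_const)).exists_isGreatest
    ⟨m₀, hm₀K, le_rfl⟩

/- Take the last minimizer and the first maximizer: between them neither extreme value recurs. -/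
theorem exists_isMinOn_isMaxOn_forall_mem_Ioo {α β : Type*} [LinearOrder α] [TopologicalSpace α]
    [OrderClosedTopology α] [LinearOrder β] [TopologicalSpace β] [OrderClosedTopology β]
    {K : Set α} (hK : IsCompact K) (hne : K.Nonempty) {ψ : α → β} (hψ : Continuous ψ) :
    ∃ m ∈ K, ∃ M ∈ K, IsMinOn ψ K m ∧ IsMaxOn ψ K M ∧
      ∀ s ∈ K, s ∈ Set.Ioo m M → ψ s ∈ Set.Ioo (ψ m) (ψ M) := by
  obtain ⟨m, ⟨hmK, hm⟩, hlast⟩ := exists_isGreatest_isMinOn hK hne hψ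
  obtain ⟨M, ⟨hMK, hM⟩, hfirst⟩ :=
    exists_isGreatest_isMinOn (α := αᵒᵈ) (β := βᵒᵈ) hK hne hψ
  refine ⟨m, hmK, M, hMK, hm, hM, fun s hs hsmM => ⟨?_, ?_⟩⟩
  · refine lt_of_not_ge fun hle => hsmM.1.not_ge (hlast ⟨hs, fun x hx => ?_⟩)
    exact hle.trans (hm hx)
  · refine lt_of_not_ge fun hle => hsmM.2.not_ge (hfirst ⟨hs, fun x hx => ?_⟩)
    exact le_trans (show ψ x ≤ ψ M from hM hx) hle

theorem exists_pos_forall_isMinOn_mem {X : Type*} [TopologicalSpace X] {K : Set X}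
    (hK : IsCompact K) {φ : X → ℝ} (hφ : ContinuousOn φ K) {a : X} (ha : a ∈ K)
    (hmin : ∀ x ∈ K, x ≠ a → φ a < φ x) {U : Set X} (hU : U ∈ 𝓝 a) :
    ∃ δ > 0, ∀ ψ : X → ℝ, (∀ x ∈ K, |ψ x - φ x| ≤ δ) → ∀ m ∈ K, IsMinOn ψ K m → m ∈ U := by
  have hK' : IsCompact (K \ interior U) := hK.diff isOpen_interior
  rcases (K \ interior U).eq_empty_or_nonempty with hempty | hne
  · exact ⟨1, one_pos, fun _ _ _ hm _ => interior_subset (Set.sdiff_eq_empty.1 hempty hm)⟩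
  obtain ⟨x, ⟨hxK, hxU⟩, hx⟩ := hK'.exists_isMinOn hne (hφ.mono Set.sdiff_subset)
  have hgap : φ a < φ x := by
    refine hmin x hxK ?_
    rintro rfl
    exact hxU (mem_interior_iff_mem_nhds.2 hU)
  refine ⟨(φ x - φ a) / 3, by linarith, fun ψ hψ m hm hmψ => ?_⟩
  by_contra hmU
  have hxm : φ x ≤ φ m := hx ⟨hm, fun h => hmU (interior_subset h)⟩
  have hma : ψ m ≤ ψ a := hmψ ha
  linarith [abs_le.1 (hψ a ha), abs_le.1 (hψ m hm)]

theorem exists_pos_forall_isMaxOn_mem {X : Type*} [TopologicalSpace X] {K : Set X}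
    (hK : IsCompact K) {φ : X → ℝ} (hφ : ContinuousOn φ K) {b : X} (hb : b ∈ K)
    (hmax : ∀ x ∈ K, x ≠ b → φ x < φ b) {U : Set X} (hU : U ∈ 𝓝 b) :
    ∃ δ > 0, ∀ ψ : X → ℝ, (∀ x ∈ K, |ψ x - φ x| ≤ δ) → ∀ M ∈ K, IsMaxOn ψ K M → M ∈ U := by
  obtain ⟨δ, hδ, h⟩ := exists_pos_forall_isMinOn_mem hK hφ.neg hb
    (fun x hx hxb => neg_lt_neg (hmax x hx hxb)) hU
  refine ⟨δ, hδ, fun ψ hψ M hM hMψ => h (-ψ) (fun x hx => ?_) M hM hMψ.neg⟩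
  rw [Pi.neg_apply, Pi.neg_apply, neg_sub_neg, abs_sub_comm]
  exact hψ x hx

theorem forall_mem_Icc_nonneg_or_nonpos {a b : ℝ} (hab : a < b) {ψ : ℝ → ℝ} (hψ : Continuous ψ)
    (hne : ∀ s ∈ Set.Ioo a b, ψ s ≠ 0) :
    (∀ s ∈ Set.Icc a b, 0 ≤ ψ s) ∨ ∀ s ∈ Set.Icc a b, ψ s ≤ 0 := by
  by_contra! ⟨⟨s, hs, hneg⟩, t, ht, hpos⟩
  rw [← closure_Ioo hab.ne, _root_.mem_closure_iff] at hs ht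
  obtain ⟨s', hneg', hs'⟩ := hs {x | ψ x < 0} (isOpen_lt hψ continuous_const) hneg
  obtain ⟨t', hpos', ht'⟩ := ht {x | 0 < ψ x} (isOpen_lt continuous_const hψ) hpos
  obtain ⟨x, hx, hx0⟩ := isPreconnected_Ioo.intermediate_value hs' ht' hψ.continuousOn
    ⟨le_of_lt hneg', le_of_lt hpos'⟩
  exact hne x hx hx0

end IntervalExtrema

namespace memI

variable {φ ψ : ℝ → ℝ}

theorem id : memI id :=
  ⟨LipschitzWith.id, fun _ _ hab _ => abs_of_pos (sub_pos.2 hab)⟩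

theorem neg (hψ : memI ψ) : memI fun t => -ψ t := by
  refine ⟨hψ.1.neg, fun a b hab h => ?_⟩
  rw [neg_sub_neg, abs_sub_comm]
  refine hψ.2 a b hab fun s hs => ?_
  have := h s hs
  rwa [min_neg_neg, max_neg_neg, ← Set.neg_mem_Ioo_iff, neg_neg] at this

theorem add_const (hψ : memI ψ) (c : ℝ) : memI fun t => ψ t + c := by
  refine ⟨by simpa using hψ.1.add (LipschitzWith.const c), fun a b hab h => ?_⟩
  rw [add_sub_add_right_eq_sub]
  refine hψ.2 a b hab fun s hs => ?_
  simpa only [min_add_add_right, max_add_add_right, Set.mem_Ioo, add_lt_add_iff_right] using h s hs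

theorem abs_sub_abs_of_nonneg (hψ : memI ψ) {a b : ℝ} (hab : a < b)
    (hnonneg : ∀ s ∈ Set.Icc a b, 0 ≤ ψ s)
    (h : ∀ s ∈ Set.Ioo a b, |ψ s| ∈ Set.Ioo (min |ψ a| |ψ b|) (max |ψ a| |ψ b|)) :
    |(|ψ b| - |ψ a|)| = b - a := by
  rw [abs_of_nonneg (hnonneg a (Set.left_mem_Icc.2 hab.le)),
    abs_of_nonneg (hnonneg b (Set.right_mem_Icc.2 hab.le))] at h ⊢
  refine hψ.2 a b hab fun s hs => ?_
  simpa only [abs_of_nonneg (hnonneg s (Set.Ioo_subset_Icc_self hs))] using h s hs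

theorem abs (hψ : memI ψ) : memI fun t => |ψ t| := by
  refine ⟨by simpa [Function.comp_def] using lipschitzWith_one_norm.comp hψ.1, fun a b hab h => ?_⟩
  have hne : ∀ s ∈ Set.Ioo a b, ψ s ≠ 0 := fun s hs hs0 => by
    have hlt : min |ψ a| |ψ b| < |ψ s| := (h s hs).1
    rw [hs0, abs_zero] at hlt
    exact hlt.not_ge (le_min (abs_nonneg _) (abs_nonneg _))
  rcases forall_mem_Icc_nonneg_or_nonpos hab hψ.1.continuous hne with hsign | hsign
  · exact hψ.abs_sub_abs_of_nonneg hab hsign h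
  · have hneg := hψ.neg.abs_sub_abs_of_nonneg hab (fun s hs => neg_nonneg.2 (hsign s hs))
    simp only [abs_neg] at hneg
    exact hneg h

theorem fold (hψ : memI ψ) (c : ℝ) : memI fun t => |ψ t - c| + c :=
  (hψ.add_const (-c)).abs.add_const c

theorem sub_le_sub_of_approx {a b : ℝ} (hab : a < b) (hφ : Continuous φ)
    (hmin : ∀ s ∈ Set.Icc a b, s ≠ a → φ a < φ s) (hmax : ∀ s ∈ Set.Icc a b, s ≠ b → φ s < φ b)
    (happ : ∀ δ > 0, ∃ ψ, memI ψ ∧ ∀ s ∈ Set.Icc a b, |ψ s - φ s| ≤ δ) :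
    b - a ≤ φ b - φ a := by
  have ha : a ∈ Set.Icc a b := Set.left_mem_Icc.2 hab.le
  have hb : b ∈ Set.Icc a b := Set.right_mem_Icc.2 hab.le
  refine le_of_forall_pos_le_add fun η hη => ?_
  obtain ⟨δ₁, hδ₁, hnear_a⟩ := exists_pos_forall_isMinOn_mem isCompact_Icc hφ.continuousOn ha hmin
    (Iio_mem_nhds (show a < a + η / 4 by linarith))
  obtain ⟨δ₂, hδ₂, hnear_b⟩ := exists_pos_forall_isMaxOn_mem isCompact_Icc hφ.continuousOn hb hmax
    (Ioi_mem_nhds (show b - η / 4 < b by linarith))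
  obtain ⟨ψ, hψ, hclose⟩ := happ (min (min δ₁ δ₂) (η / 4)) (by positivity)
  obtain ⟨m, hm, M, hM, hmψ, hMψ, hbetween⟩ :=
    exists_isMinOn_isMaxOn_forall_mem_Ioo isCompact_Icc ⟨a, ha⟩ hψ.1.continuous
  have hma : m < a + η / 4 := hnear_a ψ (fun s hs => (hclose s hs).trans
    ((min_le_left _ _).trans (min_le_left _ _))) m hm hmψ
  have hMb : b - η / 4 < M := hnear_b ψ (fun s hs => (hclose s hs).trans
    ((min_le_left _ _).trans (min_le_right _ _))) M hM hMψ
  have hφab : φ a < φ b := hmin b hb hab.ne'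
  rcases le_or_gt M m with hMm | hmM
  · linarith
  have hψmM : ψ m ≤ ψ M := hmψ hM
  have hiso : |ψ M - ψ m| = M - m := hψ.2 m M hmM fun s hs => by
    rw [min_eq_left hψmM, max_eq_right hψmM]
    exact hbetween s ⟨hm.1.trans hs.1.le, hs.2.le.trans hM.2⟩ hs
  rw [abs_of_nonneg (sub_nonneg.2 hψmM)] at hiso
  have hφm : φ a ≤ φ m := (eq_or_ne m a).elim (fun h => h ▸ le_rfl) fun h => (hmin m hm h).le
  have hφM : φ M ≤ φ b := (eq_or_ne M b).elim (fun h => h ▸ le_rfl) fun h => (hmax M hM h).le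
  have hclose' : ∀ s ∈ Set.Icc a b, |ψ s - φ s| ≤ η / 4 :=
    fun s hs => (hclose s hs).trans (min_le_right _ _)
  linarith [abs_le.1 (hclose' m hm), abs_le.1 (hclose' M hM)]

theorem le_abs_sub_of_approx {a b : ℝ} (hab : a < b) (hφ : Continuous φ)
    (hlt : φ a < φ b) (h : ∀ s ∈ Set.Ioo a b, φ s ∈ Set.Ioo (φ a) (φ b))
    (happ : ∀ δ > 0, ∃ ψ, memI ψ ∧ ∀ s ∈ Set.Icc a b, |ψ s - φ s| ≤ δ) :
    b - a ≤ |φ b - φ a| := by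
  refine (sub_le_sub_of_approx hab hφ (fun s hs hsa => ?_) (fun s hs hsb => ?_) happ).trans
    (le_abs_self _)
  · rcases hs.2.eq_or_lt with rfl | hsb
    · exact hlt
    · exact (h s ⟨hs.1.lt_of_ne' hsa, hsb⟩).1
  · rcases hs.1.eq_or_lt with rfl | hsa
    · exact hlt
    · exact (h s ⟨hsa, hs.2.lt_of_ne hsb⟩).2

theorem of_approx (hφ : LipschitzWith 1 φ)
    (happ : ∀ L ≥ 0, ∀ r > 0, ∃ ψ, memI ψ ∧ ∀ s, |s| ≤ L → |ψ s - φ s| ≤ r) : memI φ := by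
  refine ⟨hφ, fun a b hab h => le_antisymm ?_ ?_⟩
  · simpa [Real.dist_eq, abs_of_pos (sub_pos.2 hab)] using hφ.dist_le_mul b a
  have happ' : ∀ δ > 0, ∃ ψ, memI ψ ∧ ∀ s ∈ Set.Icc a b, |ψ s - φ s| ≤ δ := fun δ hδ => by
    obtain ⟨ψ, hψ, hclose⟩ := happ (max |a| |b|) (by positivity) δ hδ
    exact ⟨ψ, hψ, fun s hs => hclose s (abs_le_max_abs_abs hs.1 hs.2)⟩
  rcases lt_trichotomy (φ a) (φ b) with hlt | heq | hgt
  · rw [min_eq_left hlt.le, max_eq_right hlt.le] at h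
    exact le_abs_sub_of_approx hab hφ.continuous hlt h happ'
  · obtain ⟨hmin, hmax⟩ := h ((a + b) / 2) ⟨by linarith, by linarith⟩
    rw [heq, min_self] at hmin
    rw [heq, max_self] at hmax
    exact absurd hmin hmax.not_gt
  · rw [min_eq_right hgt.le, max_eq_left hgt.le] at h
    have hneg := le_abs_sub_of_approx (φ := -φ) hab hφ.continuous.neg (neg_lt_neg hgt)
      (fun s hs => ⟨neg_lt_neg (h s hs).2, neg_lt_neg (h s hs).1⟩) fun δ hδ => by
        obtain ⟨ψ, hψ, hclose⟩ := happ' δ hδ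
        refine ⟨_, hψ.neg, fun s hs => ?_⟩
        rw [Pi.neg_apply, neg_sub_neg, abs_sub_comm]
        exact hclose s hs
    rwa [Pi.neg_apply, Pi.neg_apply, neg_sub_neg, abs_sub_comm] at hneg

end memI

section Polarization

variable {n : ℕ} {u v : Euc n}

/-- The reflection of `x` in the hyperplane `{x : ⟪x, v⟫ = c}`, for a unit vector `v`; it is the map
`†` in the definition of the polarization `polzn v c`. -/
def hyperplaneReflection (v : Euc n) (c : ℝ) (x : Euc n) : Euc n :=
  x - (2 * (⟪x, v⟫ - c)) • v

theorem inner_hyperplaneReflection (hv : ‖v‖ = 1) (c : ℝ) (x : Euc n) :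
    ⟪hyperplaneReflection v c x, v⟫ = 2 * c - ⟪x, v⟫ := by
  rw [hyperplaneReflection, inner_sub_left, real_inner_smul_left, real_inner_self_eq_norm_sq, hv]
  ring

theorem involutive_hyperplaneReflection (hv : ‖v‖ = 1) (c : ℝ) :
    Function.Involutive (hyperplaneReflection v c) := fun x => by
  rw [hyperplaneReflection, inner_hyperplaneReflection hv, hyperplaneReflection]
  module

theorem dist_hyperplaneReflection_sq (hv : ‖v‖ = 1) (c : ℝ) (x y : Euc n) :
    dist (hyperplaneReflection v c x) y ^ 2 =
      dist x y ^ 2 + 4 * (⟪x, v⟫ - c) * (⟪y, v⟫ - c) := by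
  rw [dist_eq_norm, dist_eq_norm, hyperplaneReflection, sub_right_comm, norm_sub_sq_real,
    real_inner_smul_right, norm_smul, mul_pow, hv, inner_sub_left, Real.norm_eq_abs, sq_abs]
  ring

theorem dist_hyperplaneReflection_comm (hv : ‖v‖ = 1) (c : ℝ) (x y : Euc n) :
    dist (hyperplaneReflection v c x) y = dist x (hyperplaneReflection v c y) := by
  rw [← sq_eq_sq₀ dist_nonneg dist_nonneg, dist_comm x, dist_hyperplaneReflection_sq hv,
    dist_hyperplaneReflection_sq hv, dist_comm x]
  ring

theorem dist_le_dist_hyperplaneReflection (hv : ‖v‖ = 1) {c : ℝ} {x y : Euc n}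
    (hx : c ≤ ⟪x, v⟫) (hy : c ≤ ⟪y, v⟫) : dist x y ≤ dist (hyperplaneReflection v c x) y := by
  rw [← sq_le_sq₀ dist_nonneg dist_nonneg, dist_hyperplaneReflection_sq hv]
  nlinarith [mul_nonneg (sub_nonneg.2 hx) (sub_nonneg.2 hy)]

theorem dist_hyperplaneReflection_le_dist (hv : ‖v‖ = 1) {c : ℝ} {x y : Euc n}
    (hx : ⟪x, v⟫ ≤ c) (hy : c ≤ ⟪y, v⟫) : dist (hyperplaneReflection v c x) y ≤ dist x y := by
  rw [← sq_le_sq₀ dist_nonneg dist_nonneg, dist_hyperplaneReflection_sq hv]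
  nlinarith [mul_nonneg (sub_nonneg.2 hx) (sub_nonneg.2 hy)]

theorem polzn_mono (v : Euc n) (c : ℝ) : Monotone (polzn v c) := by
  rintro A B hAB x (⟨hx, hxA⟩ | ⟨hx, hxA, hxA'⟩)
  · exact Or.inl ⟨hx, hxA.imp (@hAB _) (@hAB _)⟩
  · exact Or.inr ⟨hx, hAB hxA, hAB hxA'⟩

theorem polzn_preimage_hyperplaneReflection (hv : ‖v‖ = 1) (c : ℝ) (A : Set (Euc n)) :
    polzn v c (hyperplaneReflection v c ⁻¹' A) = polzn v c A := by
  have hmem (x : Euc n) : hyperplaneReflection v c x ∈ hyperplaneReflection v c ⁻¹' A ↔ x ∈ A := by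
    rw [Set.mem_preimage, involutive_hyperplaneReflection hv]
  ext x
  exact or_congr (and_congr_right fun _ => (or_congr_right (hmem x)).trans or_comm)
    (and_congr_right fun _ => (and_congr_right fun _ => hmem x).trans and_comm)

theorem polzn_closedBall_of_le (hv : ‖v‖ = 1) {c : ℝ} {z : Euc n} (hz : c ≤ ⟪z, v⟫) (r : ℝ) :
    polzn v c (closedBall z r) = closedBall z r := by
  ext x
  constructor
  · rintro (⟨hx, hxz | hxz⟩ | ⟨-, hxz, -⟩)
    · exact hxz
    · exact (dist_le_dist_hyperplaneReflection hv hx hz).trans hxz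
    · exact hxz
  · intro hxz
    rcases le_total c ⟪x, v⟫ with hx | hx
    · exact Or.inl ⟨hx, Or.inl hxz⟩
    · exact Or.inr ⟨hx, hxz, (dist_hyperplaneReflection_le_dist hv hx hz).trans hxz⟩

theorem polzn_closedBall (hv : ‖v‖ = 1) (c : ℝ) {x : Euc n} (hx : ⟪x, v⟫ = 0) (t r : ℝ) :
    polzn v c (closedBall (x + t • v) r) = closedBall (x + (|t - c| + c) • v) r := by
  have hinner : ⟪x + t • v, v⟫ = t := by
    rw [inner_add_left, hx, real_inner_smul_left, real_inner_self_eq_norm_sq, hv]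
    ring
  rcases le_total c t with hct | htc
  · rw [abs_of_nonneg (sub_nonneg.2 hct), sub_add_cancel]
    exact polzn_closedBall_of_le hv (by rwa [hinner]) r
  · have hpreimage : hyperplaneReflection v c ⁻¹' closedBall (x + t • v) r =
        closedBall (hyperplaneReflection v c (x + t • v)) r := by
      ext y
      rw [Set.mem_preimage, mem_closedBall, mem_closedBall, dist_hyperplaneReflection_comm hv]
    rw [← polzn_preimage_hyperplaneReflection hv, hpreimage, polzn_closedBall_of_le hv
      (by rw [inner_hyperplaneReflection hv, hinner]; linarith), hyperplaneReflection, hinner,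
      abs_of_nonpos (sub_nonpos.2 htc)]
    congr 1
    module

theorem polzn_neg_closedBall (hu : ‖u‖ = 1) (c : ℝ) {x : Euc n} (hx : ⟪x, u⟫ = 0) (t r : ℝ) :
    polzn (-u) c (closedBall (x + t • u) r) = closedBall (x + (-(|-t - c| + c)) • u) r := by
  have hneg := polzn_closedBall (v := -u) (by rwa [norm_neg]) c
    (by rw [inner_neg_right, hx, neg_zero]) (-t) r
  rwa [neg_smul_neg, smul_neg, ← neg_smul] at hneg

theorem isPolCompParallel.monotone {S : Set (Euc n) → Set (Euc n)} (hS : isPolCompParallel u S) :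
    Monotone S := by
  obtain ⟨l, -, -, rfl⟩ := hS
  induction l with
  | nil => exact monotone_id
  | cons p l ih => exact (polzn_mono p.1 p.2).comp ih

theorem isPolCompParallel.exists_memI_closedBall (hu : ‖u‖ = 1) {S : Set (Euc n) → Set (Euc n)}
    (hS : isPolCompParallel u S) :
    ∃ ψ, memI ψ ∧ ∀ x, ⟪x, u⟫ = 0 → ∀ t r : ℝ,
      S (closedBall (x + t • u) r) = closedBall (x + ψ t • u) r := by
  obtain ⟨l, -, hl, rfl⟩ := hS
  induction l with
  | nil => exact ⟨id, memI.id, fun _ _ _ _ => rfl⟩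
  | cons p l ih =>
    obtain ⟨ψ, hψ, hball⟩ := ih fun q hq => hl q (List.mem_cons_of_mem _ hq)
    rcases hl p List.mem_cons_self with hp | hp
    · refine ⟨_, hψ.fold p.2, fun x hx t r => ?_⟩
      rw [List.map_cons, List.foldr_cons, Function.comp_apply, hball x hx, hp,
        polzn_closedBall hu p.2 hx]
    · refine ⟨_, (hψ.neg.fold p.2).neg, fun x hx t r => ?_⟩
      rw [List.map_cons, List.foldr_cons, Function.comp_apply, hball x hx, hp,
        polzn_neg_closedBall hu p.2 hx]

theorem isPolCompParallel.exists_memI_assocContr (hu : ‖u‖ = 1) {S : Set (Euc n) → Set (Euc n)}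
    (hS : isPolCompParallel u S) : ∃ ψ, memI ψ ∧ assocContr u S ψ := by
  obtain ⟨ψ, hψ, hball⟩ := hS.exists_memI_closedBall hu
  refine ⟨ψ, hψ, hψ.1, fun x hx t r _ => ?_⟩
  rw [hball x hx, essEq, Set.sdiff_self, Set.union_self, measure_empty]

end Polarization

section Tube

/-- The tube of vertical radius `r` around the graph of `g` over `R`: the region swept out by the
segments of length `2 * r` centred on the graph. Balls moved along a hyperplane direction sweep out
the preimage of such a tube, see `essSub_preimage_tube`. -/
def tube {F : Type*} (g : F → ℝ) (r : ℝ) (R : Set F) : Set (F × ℝ) :=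
  regionBetween (fun z => g z - r) (fun z => g z + r) R

theorem mem_tube {F : Type*} {g : F → ℝ} {r : ℝ} {R : Set F} {p : F × ℝ} :
    p ∈ tube g r R ↔ p.1 ∈ R ∧ |p.2 - g p.1| < r := by
  refine and_congr_right fun _ => ?_
  rw [Set.mem_Ioo, abs_lt, neg_lt_sub_iff_lt_add, sub_lt_iff_lt_add, sub_lt_iff_lt_add', add_comm r]

theorem measurableSet_tube {F : Type*} [MeasurableSpace F] {g : F → ℝ} (hg : Measurable g) (r : ℝ)
    {R : Set F} (hR : MeasurableSet R) : MeasurableSet (tube g r R) :=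
  measurableSet_regionBetween (hg.sub_const r) (hg.add_const r) hR

theorem measure_tube {F : Type*} [MeasurableSpace F] (μ : Measure F) [SigmaFinite μ] {g : F → ℝ}
    (hg : Measurable g) (r : ℝ) {R : Set F} (hR : MeasurableSet R) :
    (μ.prod volume) (tube g r R) = ENNReal.ofReal (2 * r) * μ R := by
  rw [tube, volume_regionBetween_eq_lintegral (hg.sub_const r).aemeasurable
    (hg.add_const r).aemeasurable hR, ← setLIntegral_const]
  congr with z
  rw [Pi.sub_apply, add_sub_sub_cancel, ← two_mul]

theorem exists_prod_ball_subset_tube_sdiff {F : Type*} [PseudoMetricSpace F] {g h : F → ℝ}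
    {C : NNReal} (hg : LipschitzWith C g) (hh : LipschitzWith C h) {r ρ : ℝ} (hρ : C * ρ ≤ r / 8)
    {R : Set F} {z₀ : F} (hball : ball z₀ ρ ⊆ R) (hgap : r < |g z₀ - h z₀|) :
    ∃ c, ball z₀ ρ ×ˢ ball c (r / 4) ⊆ tube g r R \ tube h r R := by
  have hlip {f : F → ℝ} (hf : LipschitzWith C f) {z : F} (hz : z ∈ ball z₀ ρ) :
      |f z - f z₀| ≤ r / 8 :=
    (hf.dist_le_mul_of_le (le_of_lt hz)).trans hρ
  rcases lt_abs.1 hgap with hlt | hlt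
  · refine ⟨g z₀ + r / 2, fun ⟨z, t⟩ ⟨hz, ht⟩ => ?_⟩
    have hgz := abs_le.1 (hlip hg hz)
    have hhz := abs_le.1 (hlip hh hz)
    have htc := abs_lt.1 (show |t - (g z₀ + r / 2)| < r / 4 from ht)
    refine ⟨mem_tube.2 ⟨hball hz, abs_lt.2 ⟨by linarith, by linarith⟩⟩, fun hmem => ?_⟩
    linarith [abs_lt.1 (mem_tube.1 hmem).2]
  · refine ⟨g z₀ - r / 2, fun ⟨z, t⟩ ⟨hz, ht⟩ => ?_⟩
    have hgz := abs_le.1 (hlip hg hz)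
    have hhz := abs_le.1 (hlip hh hz)
    have htc := abs_lt.1 (show |t - (g z₀ - r / 2)| < r / 4 from ht)
    refine ⟨mem_tube.2 ⟨hball hz, abs_lt.2 ⟨by linarith, by linarith⟩⟩, fun hmem => ?_⟩
    linarith [abs_lt.1 (mem_tube.1 hmem).2]

theorem le_measure_tube_union_tube {F : Type*} [PseudoMetricSpace F] [MeasurableSpace F]
    [OpensMeasurableSpace F] (μ : Measure F) [SigmaFinite μ] {g h : F → ℝ}
    {C : NNReal} (hg : LipschitzWith C g) (hh : LipschitzWith C h) {r ρ : ℝ} (hρ : C * ρ ≤ r / 8)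
    {R : Set F} (hR : MeasurableSet R) {z₀ : F} (hball : ball z₀ ρ ⊆ R) (hgap : r < |g z₀ - h z₀|) :
    ENNReal.ofReal (2 * r) * μ R + ENNReal.ofReal (r / 2) * μ (ball z₀ ρ) ≤
      (μ.prod volume) (tube h r R ∪ tube g r R) := by
  obtain ⟨c, hc⟩ := exists_prod_ball_subset_tube_sdiff hg hh hρ hball hgap
  have hbox : (μ.prod volume) (ball z₀ ρ ×ˢ ball c (r / 4)) =
      ENNReal.ofReal (r / 2) * μ (ball z₀ ρ) := by
    rw [Measure.prod_prod, Real.volume_ball, mul_comm, show 2 * (r / 4) = r / 2 by ring]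
  rw [← measure_tube μ hh.continuous.measurable r hR, ← hbox,
    ← measure_add_sdiff (measurableSet_tube hh.continuous.measurable r hR).nullMeasurableSet]
  gcongr

end Tube

section SlabCoordinates

variable {E : Type*} [NormedAddCommGroup E] [InnerProductSpace ℝ E] {u : E}

theorem inner_coe_orthogonal_singleton (z : (ℝ ∙ u)ᗮ) : ⟪u, (z : E)⟫ = 0 :=
  Submodule.mem_orthogonal_singleton_iff_inner_right.1 z.2

theorem orthogonalProjectionOnto_add_inner_smul (hu : ‖u‖ = 1) (y : E) :
    ((ℝ ∙ u)ᗮ.orthogonalProjectionOnto y : E) + ⟪u, y⟫ • u = y := by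
  rw [← Submodule.starProjection_apply, Submodule.starProjection_orthogonal_val,
    Submodule.starProjection_unit_singleton ℝ hu, sub_add_cancel]

/-- The linear coordinates `y ↦ (z, ⟪u, y⟫ - f z)` on `E`, where `z` is the component of `y`
orthogonal to the unit vector `u`, rescaled by the factor `a`. The first coordinate runs along the
hyperplane `uᗮ`, the second one is the height over the graph of `f`. -/
def slabCoord (hu : ‖u‖ = 1) {a : ℝ} (ha : a ≠ 0) (f : (ℝ ∙ u)ᗮ →L[ℝ] ℝ) :
    E ≃L[ℝ] (ℝ ∙ u)ᗮ × ℝ :=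
  .equivOfInverse
    ((a • (ℝ ∙ u)ᗮ.orthogonalProjectionOnto).prod
      (innerSL ℝ u - f ∘L (a • (ℝ ∙ u)ᗮ.orthogonalProjectionOnto)))
    ((a⁻¹ • (ℝ ∙ u)ᗮ.subtypeL + f.smulRight u).coprod (.toSpanSingleton ℝ u))
    (fun y => by
      set z := (ℝ ∙ u)ᗮ.orthogonalProjectionOnto y
      change a⁻¹ • a • (z : E) + f (a • z) • u + (⟪u, y⟫ - f (a • z)) • u = y
      rw [inv_smul_smul₀ ha, sub_smul, add_assoc, add_sub_cancel,
        orthogonalProjectionOnto_add_inner_smul hu])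
    (fun ⟨z, t⟩ => by
      simp [ha, hu, inner_add_right, inner_smul_right, inner_coe_orthogonal_singleton,
        Submodule.orthogonalProjectionOnto_orthogonalComplement_singleton_eq_zero])

variable (hu : ‖u‖ = 1) {a : ℝ} (ha : a ≠ 0) (f : (ℝ ∙ u)ᗮ →L[ℝ] ℝ)

theorem slabCoord_symm_apply (z : (ℝ ∙ u)ᗮ) (t : ℝ) :
    (slabCoord hu ha f).symm (z, t) = a⁻¹ • (z : E) + (f z + t) • u := by
  rw [add_smul, ← add_assoc]
  rfl

theorem dist_slabCoord_symm (z : (ℝ ∙ u)ᗮ) (t s : ℝ) :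
    dist ((slabCoord hu ha f).symm (z, t)) ((slabCoord hu ha f).symm (z, s)) = |t - s| := by
  rw [slabCoord_symm_apply, slabCoord_symm_apply, dist_add_left, dist_eq_norm, ← sub_smul,
    norm_smul, hu, mul_one, add_sub_add_left_eq_sub, Real.norm_eq_abs]

theorem norm_slabCoord_fst_le (y : E) : ‖(slabCoord hu ha f y).1‖ ≤ |a| * ‖y‖ := by
  change ‖a • (ℝ ∙ u)ᗮ.orthogonalProjectionOnto y‖ ≤ _
  rw [norm_smul, Real.norm_eq_abs]
  gcongr
  exact Submodule.norm_orthogonalProjectionOnto_apply_le _ y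

theorem norm_slabCoord_snd_le (hf : ‖f‖ ≤ 1) (y : E) :
    ‖(slabCoord hu ha f y).2‖ ≤ ‖y‖ + |a| * ‖y‖ := by
  refine (norm_sub_le ⟪u, y⟫ (f (slabCoord hu ha f y).1)).trans (add_le_add ?_ ?_)
  · simpa [hu] using norm_inner_le_norm (𝕜 := ℝ) u y
  · exact ((f.le_of_opNorm_le hf _).trans_eq (one_mul _)).trans (norm_slabCoord_fst_le hu ha f y)

theorem closedBall_subset_preimage_slabCoord (hf : ‖f‖ ≤ 1) {ℓ r : ℝ} {z : (ℝ ∙ u)ᗮ}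
    (hz : z ∈ closedBall 0 ℓ) :
    closedBall ((slabCoord hu ha f).symm (z, 0)) r ⊆
      slabCoord hu ha f ⁻¹' (closedBall 0 (ℓ + |a| * r) ×ˢ closedBall 0 (r + |a| * r)) := by
  intro y hy
  set x := y - (slabCoord hu ha f).symm (z, 0) with hx
  have hxr : ‖x‖ ≤ r := by rwa [hx, ← dist_eq_norm]
  have hy_eq : slabCoord hu ha f y = (z, 0) + slabCoord hu ha f x := by
    rw [hx, map_sub, ContinuousLinearEquiv.apply_symm_apply, add_sub_cancel]
  rw [Set.mem_preimage, hy_eq, Set.mem_prod, mem_closedBall_zero_iff, mem_closedBall_zero_iff]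
  constructor
  · refine (norm_add_le _ _).trans (add_le_add (mem_closedBall_zero_iff.1 hz) ?_)
    exact (norm_slabCoord_fst_le hu ha f x).trans (by gcongr)
  · rw [Prod.snd_add, zero_add]
    exact (norm_slabCoord_snd_le hu ha f hf x).trans (by gcongr)

end SlabCoordinates

section HaarMeasure

theorem exists_measure_preimage_eq_mul {E G : Type*} [NormedAddCommGroup E] [NormedSpace ℝ E]
    [MeasurableSpace E] [BorelSpace E] [NormedAddCommGroup G] [NormedSpace ℝ G]
    [FiniteDimensional ℝ G] [MeasurableSpace G] [BorelSpace G] (Φ : E ≃L[ℝ] G) (μ : Measure E)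
    [μ.IsAddHaarMeasure] (ν : Measure G) [ν.IsAddHaarMeasure] :
    ∃ c : ENNReal, c ≠ 0 ∧ c ≠ ⊤ ∧ ∀ A, μ (Φ ⁻¹' A) = c * ν A := by
  have := FiniteDimensional.proper_real G
  have hΦμ : (μ.map Φ).IsAddHaarMeasure := Φ.isAddHaarMeasure_map μ
  refine ⟨(μ.map Φ).addHaarScalarFactor ν, ?_, ENNReal.coe_ne_top, fun A => ?_⟩
  · exact ENNReal.coe_ne_zero.2 (Measure.addHaarScalarFactor_pos_of_isAddHaarMeasure _ ν).ne'
  · calc μ (Φ ⁻¹' A) = μ.map Φ A := (Φ.toHomeomorph.measurableEmbedding.map_apply μ A).symm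
      _ = _ := congrArg (· A) (Measure.isAddLeftInvariant_eq_smul (μ.map Φ) ν)

theorem exists_pos_measure_prod_closedBall_lt {F : Type*} [NormedAddCommGroup F] [NormedSpace ℝ F]
    [FiniteDimensional ℝ F] [MeasurableSpace F] [BorelSpace F] (μ : Measure F)
    [μ.IsAddHaarMeasure] {ℓ r : ℝ} (hℓ : 0 ≤ ℓ) {M : ENNReal}
    (hM : ENNReal.ofReal (2 * r) * μ (closedBall 0 ℓ) < M) :
    ∃ ε > 0, (μ.prod volume) (closedBall (0 : F) (ℓ + ε) ×ˢ closedBall (0 : ℝ) (r + ε)) < M := by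
  let V : ℝ → ENNReal := fun ε =>
    ENNReal.ofReal ((ℓ + ε) ^ Module.finrank ℝ F) * μ (ball 0 1) * ENNReal.ofReal (2 * (r + ε))
  have hV {ε : ℝ} (hε : 0 ≤ ε) :
      (μ.prod volume) (closedBall (0 : F) (ℓ + ε) ×ˢ closedBall (0 : ℝ) (r + ε)) = V ε := by
    rw [Measure.prod_prod, Real.volume_closedBall, Measure.addHaar_closedBall μ 0 (by positivity)]
  have hcont : Continuous V := by
    refine ((ENNReal.continuous_mul_const measure_ball_lt_top.ne).comp ?_).ennreal_mul ?_
      (fun _ => Or.inr ENNReal.ofReal_ne_top)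
      (fun _ => Or.inr (ENNReal.mul_ne_top ENNReal.ofReal_ne_top measure_ball_lt_top.ne))
    all_goals exact ENNReal.continuous_ofReal.comp (by fun_prop)
  have hV0 : V 0 < M := by
    rwa [← hV le_rfl, add_zero, add_zero, Measure.prod_prod, Real.volume_closedBall, mul_comm]
  have hnear : ∀ᶠ ε in 𝓝 0, V ε < M := (hcont.tendsto 0).eventually_lt_const hV0
  obtain ⟨ε, hlt, hε⟩ := ((hnear.filter_mono nhdsWithin_le_nhds).and
    (self_mem_nhdsWithin (s := Set.Ioi 0))).exists
  exact ⟨ε, hε, (hV (le_of_lt hε)).trans_lt hlt⟩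

end HaarMeasure

section EssentialContainment

variable {n : ℕ} {u : Euc n}

theorem essSub_iff_ae_le {A B : Set (Euc n)} : essSub A B ↔ A ≤ᵐ[volume] B :=
  ae_le_set.symm

theorem essSub_of_subset {A B : Set (Euc n)} (h : A ⊆ B) : essSub A B :=
  essSub_iff_ae_le.2 h.eventuallyLE

theorem essSub.trans {A B C : Set (Euc n)} (hAB : essSub A B) (hBC : essSub B C) : essSub A C :=
  essSub_iff_ae_le.2 ((essSub_iff_ae_le.1 hAB).trans (essSub_iff_ae_le.1 hBC))

theorem essSub.union {A B C D : Set (Euc n)} (hAB : essSub A B) (hCD : essSub C D) :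
    essSub (A ∪ C) (B ∪ D) :=
  essSub_iff_ae_le.2 ((essSub_iff_ae_le.1 hAB).union (essSub_iff_ae_le.1 hCD))

theorem essSub.measure_le {A B : Set (Euc n)} (h : essSub A B) : volume A ≤ volume B :=
  measure_mono_ae (essSub_iff_ae_le.1 h)

theorem essEq.essSub_symm {A B : Set (Euc n)} (h : essEq A B) : essSub B A :=
  measure_mono_null Set.subset_union_right h

theorem isConvexBody_closedBall (x : Euc n) {r : ℝ} (hr : 0 < r) :
    isConvexBody (closedBall x r) :=
  ⟨isCompact_closedBall x r, convex_closedBall x r, x,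
    ball_subset_interior_closedBall (mem_ball_self hr)⟩

theorem isConvexBody_preimage_prod_closedBall {F G : Type*} [NormedAddCommGroup F]
    [NormedSpace ℝ F] [ProperSpace F] [NormedAddCommGroup G] [NormedSpace ℝ G] [ProperSpace G]
    (Φ : Euc n ≃L[ℝ] F × G) {ℓ r : ℝ} (hℓ : 0 < ℓ) (hr : 0 < r) (x : F) (y : G) :
    isConvexBody (Φ ⁻¹' (closedBall x ℓ ×ˢ closedBall y r)) := by
  refine ⟨?_, ?_, Φ.symm (x, y), ?_⟩
  · exact Φ.toHomeomorph.isCompact_preimage.2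
      ((isCompact_closedBall x ℓ).prod (isCompact_closedBall y r))
  · exact ((convex_closedBall x ℓ).prod (convex_closedBall y r)).linear_preimage
      (Φ : Euc n →ₗ[ℝ] F × G)
  · refine preimage_interior_subset_interior_preimage Φ.continuous ?_
    rw [interior_prod_eq, Set.mem_preimage, Φ.apply_symm_apply]
    exact ⟨ball_subset_interior_closedBall (mem_ball_self hℓ),
      ball_subset_interior_closedBall (mem_ball_self hr)⟩

/-- Monotonicity, up to null sets, of a map on the convex bodies: the property common to the members
of `𝒥_H(𝒦ⁿₙ)` and to the polarizations that carries information from balls to the bodies containing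
them. Containment of the arguments is exact, only that of the images is essential. -/
def IsEssMonotone (S : Set (Euc n) → Set (Euc n)) : Prop :=
  ∀ A B, isConvexBody A → isConvexBody B → A ⊆ B → essSub (S A) (S B)

theorem inJH.isEssMonotone {S : Set (Euc n) → Set (Euc n)} (hS : inJH u S) : IsEssMonotone S :=
  fun A B hA hB hAB => hS.2.1 A B hA hB (essSub_of_subset hAB)

theorem isPolCompParallel.isEssMonotone {S : Set (Euc n) → Set (Euc n)}
    (hS : isPolCompParallel u S) : IsEssMonotone S :=
  fun _ _ _ _ hAB => essSub_of_subset (hS.monotone hAB)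

/- The balls of radius `r` centred on the graph of `f` over `R` are moved onto the balls of radius
`r` centred on the graph of `φ ∘ f`, and the open ones cover the tube around the latter. -/
theorem essSub_preimage_tube {S : Set (Euc n) → Set (Euc n)} (hS : IsEssMonotone S) {φ : ℝ → ℝ}
    (hφ : assocContr u S φ) (hu : ‖u‖ = 1) {a : ℝ} (ha : a ≠ 0) (f : (ℝ ∙ u)ᗮ →L[ℝ] ℝ) {r : ℝ}
    (hr : 0 < r) {R : Set (ℝ ∙ u)ᗮ} {K : Set (Euc n)} (hK : isConvexBody K)
    (hball : ∀ z ∈ R, closedBall ((slabCoord hu ha f).symm (z, 0)) r ⊆ K) :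
    essSub (slabCoord hu ha f ⁻¹' tube (fun z => φ (f z) - f z) r R) (S K) := by
  set Φ := slabCoord hu ha f
  have hmoved : ∀ z ∈ R, essSub (closedBall (Φ.symm (z, φ (f z) - f z)) r) (S K) := by
    intro z hz
    have horth : ⟪a⁻¹ • (z : Euc n), u⟫ = 0 := by
      rw [real_inner_smul_left, real_inner_comm, inner_coe_orthogonal_singleton, mul_zero]
    have hsub := hS _ K (isConvexBody_closedBall _ hr) hK (hball z hz)
    have heq := hφ.2 (a⁻¹ • (z : Euc n)) horth (f z) r hr
    rw [slabCoord_symm_apply, add_zero] at hsub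
    rw [slabCoord_symm_apply, add_sub_cancel]
    exact heq.essSub_symm.trans hsub
  refine measure_null_of_locally_null _ fun y ⟨hy, _⟩ => ?_
  obtain ⟨hyR, hydist⟩ := mem_tube.1 (Set.mem_preimage.1 hy)
  set z := (Φ y).1
  refine ⟨_, mem_nhdsWithin.2 ⟨ball (Φ.symm (z, φ (f z) - f z)) r, isOpen_ball, ?_, subset_rfl⟩, ?_⟩
  · rw [mem_ball, ← Φ.symm_apply_apply y]
    exact (dist_slabCoord_symm hu ha f z _ _).trans_lt hydist
  · refine measure_mono_null ?_ (hmoved z hyR)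
    exact fun x hx => ⟨ball_subset_closedBall hx.1, hx.2.2⟩

end EssentialContainment

section TestBody

variable {n : ℕ} {u : Euc n}

theorem exists_norm_eq_one_orthogonal_singleton (hn : 2 ≤ n) (u : Euc n) :
    ∃ w : (ℝ ∙ u)ᗮ, ‖w‖ = 1 := by
  have hfinrank : 0 < Module.finrank ℝ (ℝ ∙ u)ᗮ := by
    have hsum := (ℝ ∙ u).finrank_add_finrank_orthogonal
    have hle := finrank_span_le_card (R := ℝ) ({u} : Set (Euc n))
    rw [Set.toFinset_singleton, Finset.card_singleton] at hle
    rw [finrank_euclideanSpace_fin] at hsum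
    omega
  have := Module.nontrivial_of_finrank_pos hfinrank
  exact exists_norm_eq _ zero_le_one

theorem lipschitzWith_comp_sub {F : Type*} [PseudoMetricSpace F] {φ : ℝ → ℝ} {f : F → ℝ}
    (hφ : LipschitzWith 1 φ) (hf : LipschitzWith 1 f) : LipschitzWith 2 fun z => φ (f z) - f z :=
  ((hφ.comp hf).sub hf).weaken (by norm_num)

theorem le_volume_union_of_assocContr {A B : Set (Euc n) → Set (Euc n)} (hA : IsEssMonotone A)
    (hB : IsEssMonotone B) {φ ψ : ℝ → ℝ} (hφ : assocContr u A φ) (hψ : assocContr u B ψ)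
    (hu : ‖u‖ = 1) {a : ℝ} (ha : a ≠ 0) {f : (ℝ ∙ u)ᗮ →L[ℝ] ℝ} (hf : ‖f‖ ≤ 1) {r : ℝ} (hr : 0 < r)
    {R : Set (ℝ ∙ u)ᗮ} (hR : MeasurableSet R) {K : Set (Euc n)} (hK : isConvexBody K)
    (hball : ∀ z ∈ R, closedBall ((slabCoord hu ha f).symm (z, 0)) r ⊆ K) {c : ENNReal}
    (hc : ∀ T, volume (slabCoord hu ha f ⁻¹' T) = c * volume T) {z₀ : (ℝ ∙ u)ᗮ}
    (hz₀ : ball z₀ (r / 16) ⊆ R) (hgap : r < |ψ (f z₀) - φ (f z₀)|) :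
    c * (ENNReal.ofReal (2 * r) * volume R + ENNReal.ofReal (r / 2) * volume (ball z₀ (r / 16))) ≤
      volume (A K ∪ B K) := by
  have hf' : LipschitzWith 1 f := f.lipschitz.weaken hf
  have hA' := essSub_preimage_tube hA hφ hu ha f hr hK hball
  have hB' := essSub_preimage_tube hB hψ hu ha f hr hK hball
  refine le_trans ?_ (hA'.union hB').measure_le
  rw [← Set.preimage_union, hc]
  gcongr
  refine le_measure_tube_union_tube volume (lipschitzWith_comp_sub hψ.1 hf')
    (lipschitzWith_comp_sub hφ.1 hf') ?_ hR hz₀ ?_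
  · rw [NNReal.coe_ofNat]
    linarith
  · rwa [sub_sub_sub_cancel_right]

theorem exists_isConvexBody_slab (hu : ‖u‖ = 1) {f : (ℝ ∙ u)ᗮ →L[ℝ] ℝ} (hf : ‖f‖ ≤ 1) {ℓ r : ℝ}
    (hℓ : 0 ≤ ℓ) (hr : 0 < r) {M : ENNReal}
    (hM : ENNReal.ofReal (2 * r) * volume (closedBall (0 : (ℝ ∙ u)ᗮ) ℓ) < M) :
    ∃ (a : ℝ) (ha : a ≠ 0) (c : ENNReal) (K : Set (Euc n)), isConvexBody K ∧
      (∀ T, volume (slabCoord hu ha f ⁻¹' T) = c * volume T) ∧ volume K < c * M ∧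
      ∀ z ∈ closedBall 0 ℓ, closedBall ((slabCoord hu ha f).symm (z, 0)) r ⊆ K := by
  obtain ⟨ε, hε, hlt⟩ := exists_pos_measure_prod_closedBall_lt volume hℓ hM
  have ha : ε / r ≠ 0 := (div_pos hε hr).ne'
  have har : |ε / r| * r = ε := by rw [abs_of_pos (div_pos hε hr), div_mul_cancel₀ _ hr.ne']
  set Φ := slabCoord hu ha f
  obtain ⟨c, hc0, hctop, hc⟩ := exists_measure_preimage_eq_mul Φ volume (volume.prod volume)
  refine ⟨ε / r, ha, c, Φ ⁻¹' (closedBall 0 (ℓ + ε) ×ˢ closedBall 0 (r + ε)), ?_, hc, ?_,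
    fun z hz => ?_⟩
  · exact isConvexBody_preimage_prod_closedBall Φ (by positivity) (by positivity) 0 0
  · exact (hc _).trans_lt (ENNReal.mul_lt_mul_right hc0 hctop hlt)
  · simpa only [har] using closedBall_subset_preimage_slabCoord hu ha f hf (r := r) hz

theorem exists_isConvexBody_volume_lt_le_volume_union (hn : 2 ≤ n) (hu : ‖u‖ = 1) {L r : ℝ}
    (hL : 0 ≤ L) (hr : 0 < r) :
    ∃ (K : Set (Euc n)) (M : ENNReal), isConvexBody K ∧ volume K < M ∧
      ∀ A B : Set (Euc n) → Set (Euc n), ∀ φ ψ : ℝ → ℝ, IsEssMonotone A → IsEssMonotone B →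
        assocContr u A φ → assocContr u B ψ →
        ∀ s, |s| ≤ L → r < |ψ s - φ s| → M ≤ volume (A K ∪ B K) := by
  obtain ⟨w, hw⟩ := exists_norm_eq_one_orthogonal_singleton hn u
  set f : (ℝ ∙ u)ᗮ →L[ℝ] ℝ := innerSL ℝ w
  have hf : ‖f‖ ≤ 1 := (innerSL_apply_norm ℝ w).trans_le hw.le
  set R : Set (ℝ ∙ u)ᗮ := closedBall 0 (L + r)
  have hlt : ENNReal.ofReal (2 * r) * volume R < ENNReal.ofReal (2 * r) * volume R +
      ENNReal.ofReal (r / 2) * volume (ball (0 : (ℝ ∙ u)ᗮ) (r / 16)) :=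
    ENNReal.lt_add_right (ENNReal.mul_ne_top ENNReal.ofReal_ne_top measure_closedBall_lt_top.ne)
      (mul_ne_zero (ENNReal.ofReal_pos.2 (by positivity)).ne'
        (measure_ball_pos volume 0 (by positivity)).ne')
  obtain ⟨a, ha, c, K, hK, hc, hKlt, hball⟩ :=
    exists_isConvexBody_slab hu hf (by positivity) hr hlt
  refine ⟨K, _, hK, hKlt, fun A B φ ψ hA hB hφ hψ s hs hgap => ?_⟩
  have hfs : f (s • w) = s := by
    rw [innerSL_apply_apply, real_inner_smul_right, real_inner_self_eq_norm_sq, hw, one_pow,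
      mul_one]
  have hsR : ball (s • w) (r / 16) ⊆ R := by
    refine ball_subset_closedBall.trans (closedBall_subset_closedBall' ?_)
    rw [dist_zero_right, norm_smul, hw, mul_one, Real.norm_eq_abs]
    linarith
  rw [← hfs] at hgap
  have hle := le_volume_union_of_assocContr hA hB hφ hψ hu ha hf hr measurableSet_closedBall hK
    hball hc hsR hgap
  rwa [Measure.addHaar_ball_center] at hle

theorem volume_union_le_add_sd (A B : Set (Euc n)) :
    volume (A ∪ B) ≤ volume A + volume (sd B A) := by
  rw [← Set.union_sdiff_self]
  exact (measure_union_le _ _).trans (by gcongr; exact Set.subset_union_left)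

end TestBody

theorem stmt9_general {n : ℕ} (hn : 2 ≤ n) {u : Euc n} (hu : ‖u‖ = 1)
    {D : Set (Euc n) → Set (Euc n)} (hDmono : IsEssMonotone D)
    (hDvol : ∀ K, isConvexBody K → volume (D K) ≤ volume K) {φ : ℝ → ℝ} (hφ : assocContr u D φ)
    (hφnotI : ¬ memI φ) :
    ¬ ∀ K : Set (Euc n), isConvexBody K →
        ∃ S : ℕ → Set (Euc n) → Set (Euc n),
          (∀ k, isPolCompParallel u (S k)) ∧
          Tendsto (fun k => volume (sd (S k K) (D K))) atTop (𝓝 0) := by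
  intro hall
  refine hφnotI (memI.of_approx hφ.1 fun L hL r hr => ?_)
  obtain ⟨K, M, hK, hKM, hfar⟩ := exists_isConvexBody_volume_lt_le_volume_union hn hu hL hr
  obtain ⟨S, hS, hlim⟩ := hall K hK
  have hunion_lt : ∀ᶠ k in atTop, volume (D K ∪ S k K) < M := by
    have hsum : Tendsto (fun k => volume K + volume (sd (S k K) (D K))) atTop (𝓝 (volume K)) := by
      simpa only [add_zero] using hlim.const_add (volume K)
    filter_upwards [hsum.eventually_lt_const hKM] with k hk
    refine (volume_union_le_add_sd _ _).trans_lt ?_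
    exact (add_le_add_left (hDvol K hK) _).trans_lt hk
  obtain ⟨k, hk⟩ := hunion_lt.exists
  obtain ⟨ψ, hψ, hSψ⟩ := (hS k).exists_memI_assocContr hu
  refine ⟨ψ, hψ, fun s hs => not_lt.1 fun hgap => hk.not_ge ?_⟩
  exact hfar D (S k) φ ψ hDmono (hS k).isEssMonotone hφ hSψ s hs hgap

/-- Theorem 6.8: if `∂ ∈ 𝒥_H(𝒦ⁿₙ)` and its associated contraction `φ_∂` does not belong
to the class `ℐ`, then `∂` cannot be weakly approximated on the convex bodies by finite
compositions of polarizations with respect to hyperplanes parallel to `H`. -/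
theorem stmt9 {n : ℕ} (hn : 2 ≤ n) (u : Euc n) (hu : ‖u‖ = 1) (t₀ : ℝ)
    (D : Set (Euc n) → Set (Euc n)) (hD : inJH u D)
    (φ : ℝ → ℝ) (hφ : assocContr u D φ)
    (hφnotI : ¬ memI φ) :
    ¬ ∀ K : Set (Euc n), isConvexBody K →
        ∃ S : ℕ → Set (Euc n) → Set (Euc n),
          (∀ k, isPolCompParallel u (S k)) ∧
          Tendsto (fun k => volume (sd (S k K) (D K))) atTop (𝓝 0) := by
  exact stmt9_general hn hu hD.isEssMonotone (fun K hK => (hD.2.2.1 K hK).le) hφ hφnotI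
end
end

section
/- Let n ≥ 2, let 𝓔 ⊂ 𝓛ⁿ contain all closed balls, and let ∂, ♥ be maps in 𝒥(𝓔) with associated contractions ψ_{∂,r}, ψ_{♥,r} satisfying ∂B(x,r) = B(ψ_{∂,r}(x), r) and ♥B(x,r) = B(ψ_{♥,r}(x), r) essentially. Then for all x ∈ ℝⁿ and r > 0 such that (∂B(x,r)) ∩ ♥B(x,r) ≠ ∅, one has ‖ψ_{∂,r}(x) − ψ_{♥,r}(x)‖ ≤ (n / (2 r^{n−1} κ_{n−1})) · ‖1_{∂B(x,r)} − 1_{♥B(x,r)}‖_{L¹}. -/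
open MeasureTheory Metric Filter Topology
open scoped RealInnerProductSpace

noncomputable section

/-! Slice the lune `closedBall a r \ closedBall b r` by the lines parallel to `b - a`, writing
`d = ‖a - b‖`. The line over a point `y` of the hyperplane orthogonal to `b - a` (relative to `a`)
meets the first ball in a chord of length `2 * √(r ^ 2 - ‖y‖ ^ 2)` and the second in its translate
by `d`, so it meets the lune in length `min d (2 * √(r ^ 2 - ‖y‖ ^ 2))`. As `d ≤ 2 * r`, this is at
least `d / r * (r - ‖y‖)`, whose integral is the volume of a cone of height `d` over the
`(n - 1)`-ball of radius `r`, namely `d * r ^ (n - 1) * κ / n` with `κ` the volume of the unit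
`(n - 1)`-ball. The symmetric difference of the two balls consists of two such lunes. -/

open Module
open scoped ENNReal symmDiff

lemma lintegral_Ioo_ofReal_sub_pow (m : ℕ) {r : ℝ} (hr : 0 ≤ r) :
    ∫⁻ t in Set.Ioo 0 r, ENNReal.ofReal ((r - t) ^ m) =
      ENNReal.ofReal (r ^ (m + 1) / (m + 1)) := by
  have hnonneg : 0 ≤ᵐ[volume.restrict (Set.Ioo 0 r)] fun t ↦ (r - t) ^ m := by
    filter_upwards [ae_restrict_mem measurableSet_Ioo] with t ht
    exact pow_nonneg (sub_nonneg.2 ht.2.le) m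
  have hint : IntegrableOn (fun t ↦ (r - t) ^ m) (Set.Ioo 0 r) :=
    (Continuous.integrableOn_Icc (by fun_prop)).mono_set Set.Ioo_subset_Icc_self
  rw [← ofReal_integral_eq_lintegral_ofReal hint hnonneg, ← integral_Ioc_eq_integral_Ioo,
    ← intervalIntegral.integral_of_le hr,
    intervalIntegral.integral_comp_sub_left (fun s ↦ s ^ m), integral_pow]
  simp

section VerticalLune

variable {F : Type*} [NormedAddCommGroup F]

/-- The points of the `ℓ²` product `F × ℝ` lying in the closed ball of radius `|r|` about the
origin but not in its translate by `d` along the second factor: the model in which the difference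
of two balls is sliced. The balls are written out by their equations, since the norm Mathlib puts on
`F × ℝ` is the supremum norm. -/
def verticalLune (F : Type*) [NormedAddCommGroup F] (d r : ℝ) : Set (F × ℝ) :=
  {p | ‖p.1‖ ^ 2 + p.2 ^ 2 ≤ r ^ 2 ∧ r ^ 2 < ‖p.1‖ ^ 2 + (p.2 - d) ^ 2}

lemma ofReal_le_volume_fiber_verticalLune {d r : ℝ} (hd : 0 ≤ d) (hdr : d ≤ 2 * r) (y : F) :
    ENNReal.ofReal (d / r * (r - ‖y‖)) ≤ volume (Prod.mk y ⁻¹' verticalLune F d r) := by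
  have hy := norm_nonneg y
  rcases lt_or_ge ‖y‖ r with hyr | hry
  swap
  · have hle : d / r * (r - ‖y‖) ≤ 0 :=
      mul_nonpos_of_nonneg_of_nonpos (div_nonneg hd (by linarith)) (by linarith)
    simp [ENNReal.ofReal_of_nonpos hle]
  have hr : 0 < r := hy.trans_lt hyr
  set h := √(r ^ 2 - ‖y‖ ^ 2)
  have h_nonneg : 0 ≤ h := Real.sqrt_nonneg _
  have h_sq : h ^ 2 = r ^ 2 - ‖y‖ ^ 2 := Real.sq_sqrt (by nlinarith)
  have hchord : r - ‖y‖ ≤ h := Real.le_sqrt_of_sq_le (by nlinarith)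
  have hslope : d / r ≤ 2 := (div_le_iff₀ hr).2 hdr
  have hlength_le_chord : d / r * (r - ‖y‖) ≤ 2 * h := by nlinarith
  have hlength_le_shift : d / r * (r - ‖y‖) ≤ d := by
    rw [mul_sub, div_mul_cancel₀ d hr.ne']
    exact sub_le_self d (by positivity)
  have hsegment : Set.Ico (-h) (-h + d / r * (r - ‖y‖)) ⊆ Prod.mk y ⁻¹' verticalLune F d r := by
    rintro t ⟨hlower, hupper⟩
    have hmem : t ^ 2 ≤ h ^ 2 := sq_le_sq' hlower (by linarith)
    have hnotMem : h ^ 2 < (t - d) ^ 2 := sq_lt_sq.2 <| by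
      rw [abs_of_nonneg h_nonneg, abs_of_neg (by linarith)]
      linarith
    exact ⟨by linarith, by linarith⟩
  calc ENNReal.ofReal (d / r * (r - ‖y‖))
      = volume (Set.Ico (-h) (-h + d / r * (r - ‖y‖))) := by simp
    _ ≤ volume (Prod.mk y ⁻¹' verticalLune F d r) := measure_mono hsegment

variable [MeasurableSpace F] [BorelSpace F]

lemma measurableSet_verticalLune (d r : ℝ) : MeasurableSet (verticalLune F d r) := by
  unfold verticalLune
  measurability

variable [NormedSpace ℝ F] [FiniteDimensional ℝ F] (μ : Measure F) [μ.IsAddHaarMeasure]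

lemma lintegral_ofReal_sub_norm {r : ℝ} (hr : 0 ≤ r) :
    ∫⁻ y, ENNReal.ofReal (r - ‖y‖) ∂μ =
      ENNReal.ofReal (r ^ (finrank ℝ F + 1) / (finrank ℝ F + 1)) * μ (closedBall 0 1) := by
  have hsuperlevel : ∀ t ∈ Set.Ioi (0 : ℝ), μ {y : F | t < max (r - ‖y‖) 0} =
      (Set.Ioo 0 r).indicator
        (fun t ↦ ENNReal.ofReal ((r - t) ^ finrank ℝ F) * μ (ball 0 1)) t := by
    intro t (ht : 0 < t)
    have hball : {y : F | t < max (r - ‖y‖) 0} = ball 0 (r - t) := by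
      ext y
      simp [ht.not_gt, lt_sub_comm]
    rw [hball]
    rcases lt_or_ge t r with htr | hrt
    · rw [Set.indicator_of_mem (show t ∈ Set.Ioo 0 r from ⟨ht, htr⟩),
        μ.addHaar_ball_of_pos 0 (sub_pos.2 htr)]
    · rw [Set.indicator_of_notMem fun h ↦ hrt.not_gt h.2, ball_eq_empty.2 (sub_nonpos.2 hrt),
        measure_empty]
  calc ∫⁻ y, ENNReal.ofReal (r - ‖y‖) ∂μ
      = ∫⁻ y, ENNReal.ofReal (max (r - ‖y‖) 0) ∂μ := by simp [ENNReal.ofReal_max]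
    _ = ∫⁻ t in Set.Ioi (0 : ℝ), μ {y : F | t < max (r - ‖y‖) 0} :=
        lintegral_eq_lintegral_meas_lt μ (.of_forall fun _ ↦ le_max_right _ _) (by fun_prop)
    _ = ∫⁻ t in Set.Ioo 0 r, ENNReal.ofReal ((r - t) ^ finrank ℝ F) * μ (ball 0 1) := by
        rw [setLIntegral_congr_fun measurableSet_Ioi hsuperlevel,
          setLIntegral_indicator measurableSet_Ioo,
          Set.inter_eq_left.2 Set.Ioo_subset_Ioi_self]
    _ = ENNReal.ofReal (r ^ (finrank ℝ F + 1) / (finrank ℝ F + 1)) * μ (closedBall 0 1) := by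
        rw [lintegral_mul_const _ (by fun_prop), lintegral_Ioo_ofReal_sub_pow _ hr,
          μ.addHaar_unitClosedBall_eq_addHaar_unitBall]

lemma ofReal_mul_measure_closedBall_le_prod_verticalLune {d r : ℝ} (hd : 0 ≤ d)
    (hdr : d ≤ 2 * r) :
    ENNReal.ofReal (d * r ^ finrank ℝ F / (finrank ℝ F + 1)) * μ (closedBall 0 1) ≤
      μ.prod volume (verticalLune F d r) := by
  have hr : 0 ≤ r := by linarith
  have hcoeff : d / r * (r ^ (finrank ℝ F + 1) / (finrank ℝ F + 1)) =
      d * r ^ finrank ℝ F / (finrank ℝ F + 1) := by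
    rcases hr.eq_or_lt with rfl | hr
    · simp [show d = 0 by linarith]
    · field
  calc ENNReal.ofReal (d * r ^ finrank ℝ F / (finrank ℝ F + 1)) * μ (closedBall 0 1)
      = ENNReal.ofReal (d / r) * ∫⁻ y, ENNReal.ofReal (r - ‖y‖) ∂μ := by
        rw [lintegral_ofReal_sub_norm μ hr, ← mul_assoc, ← ENNReal.ofReal_mul (by positivity),
          hcoeff]
    _ = ∫⁻ y, ENNReal.ofReal (d / r * (r - ‖y‖)) ∂μ := by
        simp_rw [ENNReal.ofReal_mul (div_nonneg hd hr)]
        rw [lintegral_const_mul _ (by fun_prop)]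
    _ ≤ ∫⁻ y, volume (Prod.mk y ⁻¹' verticalLune F d r) ∂μ :=
        lintegral_mono (ofReal_le_volume_fiber_verticalLune hd hdr)
    _ = μ.prod volume (verticalLune F d r) :=
        (Measure.prod_apply (measurableSet_verticalLune d r)).symm

end VerticalLune

section InnerProductSpace

variable {E : Type*} [NormedAddCommGroup E] [InnerProductSpace ℝ E]

lemma norm_orthogonal_add_smul_sq {e : E} (he : ‖e‖ = 1) (y : (ℝ ∙ e)ᗮ) (t : ℝ) :
    ‖(y : E) + t • e‖ ^ 2 = ‖y‖ ^ 2 + t ^ 2 := by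
  have horth : ⟪(y : E), t • e⟫ = 0 := by
    rw [inner_smul_right, Submodule.mem_orthogonal_singleton_iff_inner_left.1 y.2, mul_zero]
  rw [norm_add_sq_real, horth, norm_smul, he]
  simp

lemma orthogonal_add_smul_preimage_closedBall_sdiff {e : E} (he : ‖e‖ = 1) (d : ℝ) {r : ℝ}
    (hr : 0 ≤ r) :
    (fun p : (ℝ ∙ e)ᗮ × ℝ ↦ (p.1 : E) + p.2 • e) ⁻¹' (closedBall 0 r \ closedBall (d • e) r) =
      verticalLune (ℝ ∙ e)ᗮ d r := by
  ext p
  simp only [verticalLune, Set.mem_preimage, Set.mem_sdiff, mem_closedBall_iff_norm, sub_zero,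
    not_le, Set.mem_ofPred_eq, add_sub_assoc, ← sub_smul, ← norm_orthogonal_add_smul_sq he,
    sq_le_sq₀ (norm_nonneg _) hr, sq_lt_sq₀ hr (norm_nonneg _)]

variable [FiniteDimensional ℝ E] [MeasurableSpace E] [BorelSpace E]

lemma measurePreserving_orthogonal_add_smul {e : E} (he : ‖e‖ = 1) :
    MeasurePreserving (fun p : (ℝ ∙ e)ᗮ × ℝ ↦ (p.1 : E) + p.2 • e) := by
  have hline := (LinearIsometryEquiv.toSpanUnitSingleton (𝕜 := ℝ) e he).measurePreserving
  have hprod := hline.prod (MeasurePreserving.id (volume : Measure (ℝ ∙ e)ᗮ))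
  have hdecomp := (ℝ ∙ e).orthogonalDecomposition.symm.measurePreserving
  convert! hdecomp.comp <| (WithLp.volume_preserving_toLp (ℝ ∙ e) (ℝ ∙ e)ᗮ).comp <|
    hprod.comp <| Measure.measurePreserving_swap (μ := volume) (ν := volume) using 1
  ext p
  simp [add_comm]

lemma volume_closedBall_eq_euclideanSpace {m : ℕ} (hm : finrank ℝ E = m) (r : ℝ) :
    volume (closedBall (0 : E) r) = volume (closedBall (0 : Euc m) r) := by
  subst hm
  rw [← (stdOrthonormalBasis ℝ E).measurePreserving_repr.measure_preimage
    measurableSet_closedBall.nullMeasurableSet, LinearIsometryEquiv.preimage_closedBall, map_zero]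

lemma ofReal_mul_volume_le_volume_closedBall_sdiff_smul {n : ℕ} (hn : finrank ℝ E = n) {e : E}
    (he : ‖e‖ = 1) {d r : ℝ} (hd : 0 ≤ d) (hdr : d ≤ 2 * r) :
    ENNReal.ofReal (d * r ^ (n - 1) / n) * volume (closedBall (0 : Euc (n - 1)) 1) ≤
      volume (closedBall (0 : E) r \ closedBall (d • e) r) := by
  have hfinrank : finrank ℝ (ℝ ∙ e)ᗮ + 1 = n := by
    rw [← hn, ← (ℝ ∙ e).finrank_add_finrank_orthogonal,
      finrank_span_singleton (norm_ne_zero_iff.1 (he ▸ one_ne_zero)), add_comm]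
  have hpred : finrank ℝ (ℝ ∙ e)ᗮ = n - 1 := Nat.eq_sub_of_add_eq hfinrank
  have hcast : (n : ℝ) = finrank ℝ (ℝ ∙ e)ᗮ + 1 := mod_cast hfinrank.symm
  rw [← (measurePreserving_orthogonal_add_smul he).measure_preimage
      (measurableSet_closedBall.diff measurableSet_closedBall).nullMeasurableSet,
    orthogonal_add_smul_preimage_closedBall_sdiff he d (by linarith),
    ← volume_closedBall_eq_euclideanSpace hpred, ← hpred, hcast]
  exact ofReal_mul_measure_closedBall_le_prod_verticalLune volume hd hdr

lemma ofReal_mul_volume_le_volume_closedBall_sdiff {n : ℕ} (hn : finrank ℝ E = n) {a b : E}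
    {r : ℝ} (hab : ‖a - b‖ ≤ 2 * r) :
    ENNReal.ofReal (‖a - b‖ * r ^ (n - 1) / n) * volume (closedBall (0 : Euc (n - 1)) 1) ≤
      volume (closedBall a r \ closedBall b r) := by
  rcases eq_or_ne a b with rfl | hne
  · simp
  have hdist : ‖a - b‖ ≠ 0 := norm_ne_zero_iff.2 (sub_ne_zero.2 hne)
  have hunit : ‖‖a - b‖⁻¹ • (b - a)‖ = 1 := by
    rw [norm_smul, norm_inv, norm_norm, norm_sub_rev b a, inv_mul_cancel₀ hdist]
  have htranslate : (· - a) ⁻¹' (closedBall 0 r \ closedBall (b - a) r) =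
      closedBall a r \ closedBall b r := by
    ext p
    simp [dist_eq_norm]
  rw [← htranslate, (measurePreserving_sub_right volume a).measure_preimage
    (measurableSet_closedBall.diff measurableSet_closedBall).nullMeasurableSet]
  simpa only [smul_inv_smul₀ hdist] using
    ofReal_mul_volume_le_volume_closedBall_sdiff_smul hn hunit (norm_nonneg (a - b)) hab

lemma mul_volume_real_le_volume_real_closedBall_symmDiff {n : ℕ} (hn : finrank ℝ E = n)
    {a b : E} {r : ℝ} (hab : ‖a - b‖ ≤ 2 * r) :
    2 * (‖a - b‖ * r ^ (n - 1) / n * volume.real (closedBall (0 : Euc (n - 1)) 1)) ≤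
      volume.real (closedBall a r ∆ closedBall b r) := by
  have hr : 0 ≤ r := by linarith [norm_nonneg (a - b)]
  have hsdiff {x y : E} (hxy : ‖x - y‖ ≤ 2 * r) :
      ‖x - y‖ * r ^ (n - 1) / n * volume.real (closedBall (0 : Euc (n - 1)) 1) ≤
        volume.real (closedBall x r \ closedBall y r) := by
    have hfinite : volume (closedBall x r \ closedBall y r) ≠ ∞ :=
      measure_ne_top_of_subset Set.sdiff_subset measure_closedBall_lt_top.ne
    have hle := ENNReal.toReal_mono hfinite (ofReal_mul_volume_le_volume_closedBall_sdiff hn hxy)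
    rwa [ENNReal.toReal_mul, ENNReal.toReal_ofReal (by positivity)] at hle
  have hba : ‖b - a‖ ≤ 2 * r := by rwa [norm_sub_rev]
  rw [measureReal_symmDiff_eq measurableSet_closedBall measurableSet_closedBall
    measure_closedBall_lt_top.ne measure_closedBall_lt_top.ne, two_mul]
  exact add_le_add (hsdiff hab) (norm_sub_rev b a ▸ hsdiff hba)

theorem stmt12_general {n : ℕ} (hn : finrank ℝ E = n) {P Q : Set E} {a b : E} {r : ℝ}
    (hP : P =ᵐ[volume] closedBall a r) (hQ : Q =ᵐ[volume] closedBall b r)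
    (hmeet : (closedBall a r ∩ closedBall b r).Nonempty) :
    ‖a - b‖ ≤ n / (2 * r ^ (n - 1) * volume.real (closedBall (0 : Euc (n - 1)) 1)) *
      volume.real (P ∆ Q) := by
  obtain ⟨z, hza, hzb⟩ := hmeet
  have hab : ‖a - b‖ ≤ 2 * r := by
    rw [← dist_eq_norm, two_mul]
    exact (dist_triangle_left a b z).trans (add_le_add hza hzb)
  have hsymmDiff : volume.real (P ∆ Q) = volume.real (closedBall a r ∆ closedBall b r) :=
    measureReal_congr (ae_eq_set_symmDiff hP hQ)
  rw [hsymmDiff]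
  rcases eq_or_ne a b with rfl | hne
  · simp
  have hdist : 0 < ‖a - b‖ := norm_pos_iff.2 (sub_ne_zero.2 hne)
  have hr : 0 < r := by linarith
  have hn_pos : 0 < n := hn ▸ finrank_pos_iff.2 (nontrivial_of_ne a b hne)
  set κ := volume.real (closedBall (0 : Euc (n - 1)) 1)
  have hκ : 0 < κ :=
    ENNReal.toReal_pos (measure_closedBall_pos _ _ one_pos).ne' measure_closedBall_lt_top.ne
  calc ‖a - b‖
      = n / (2 * r ^ (n - 1) * κ) * (2 * (‖a - b‖ * r ^ (n - 1) / n * κ)) := by field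
    _ ≤ n / (2 * r ^ (n - 1) * κ) * volume.real (closedBall a r ∆ closedBall b r) := by
        gcongr
        exact mul_volume_real_le_volume_real_closedBall_symmDiff hn hab

end InnerProductSpace

lemma essEq_iff_ae_eq {n : ℕ} {A B : Set (Euc n)} : essEq A B ↔ A =ᵐ[volume] B :=
  measure_symmDiff_eq_zero_iff

/-- Lemma 7.3: for two maps `∂, ♥ ∈ 𝒥(𝓔)` (monotonic, measure preserving, mapping balls
to balls) on a class `𝓔 ⊂ 𝓛ⁿ` containing all balls, with associated contractions
`ψ_{∂,r}`, `ψ_{♥,r}`, if the images of a ball `B(x,r)` under `∂` and `♥` meet, then the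
distance between their centres is bounded by `n/(2 r^{n-1} κ_{n-1})` times the `L¹` norm
of the difference of the indicator functions of the images. -/
theorem stmt12 {n : ℕ} (hn : 2 ≤ n)
    (𝓔 : Set (Set (Euc n)))
    (h𝓔meas : ∀ A ∈ 𝓔, MeasurableSet A ∧ volume A ≠ ⊤)
    (h𝓔balls : ∀ (x : Euc n) (r : ℝ), 0 < r → closedBall x r ∈ 𝓔)
    (D W : Set (Euc n) → Set (Euc n))
    (hDmeas : ∀ A ∈ 𝓔, MeasurableSet (D A) ∧ volume (D A) ≠ ⊤)
    (hWmeas : ∀ A ∈ 𝓔, MeasurableSet (W A) ∧ volume (W A) ≠ ⊤)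
    (hDmono : ∀ A ∈ 𝓔, ∀ B ∈ 𝓔, essSub A B → essSub (D A) (D B))
    (hWmono : ∀ A ∈ 𝓔, ∀ B ∈ 𝓔, essSub A B → essSub (W A) (W B))
    (hDpres : ∀ A ∈ 𝓔, volume (D A) = volume A)
    (hWpres : ∀ A ∈ 𝓔, volume (W A) = volume A)
    (hDballs : ∀ A ∈ 𝓔, (∃ (x : Euc n) (r : ℝ), 0 < r ∧ essEq A (closedBall x r)) →
        ∃ (x' : Euc n) (r' : ℝ), 0 < r' ∧ essEq (D A) (closedBall x' r'))
    (hWballs : ∀ A ∈ 𝓔, (∃ (x : Euc n) (r : ℝ), 0 < r ∧ essEq A (closedBall x r)) →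
        ∃ (x' : Euc n) (r' : ℝ), 0 < r' ∧ essEq (W A) (closedBall x' r'))
    (ψD ψW : ℝ → Euc n → Euc n)
    (hψD : ∀ (x : Euc n) (r : ℝ), 0 < r →
        essEq (D (closedBall x r)) (closedBall (ψD r x) r))
    (hψW : ∀ (x : Euc n) (r : ℝ), 0 < r →
        essEq (W (closedBall x r)) (closedBall (ψW r x) r))
    (x : Euc n) (r : ℝ) (hr : 0 < r)
    (hmeet : (closedBall (ψD r x) r ∩ closedBall (ψW r x) r).Nonempty) :
    ‖ψD r x - ψW r x‖ ≤
      (n : ℝ) / (2 * r ^ (n - 1) * (volume (closedBall (0 : Euc (n - 1)) 1)).toReal) *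
        (volume (sd (D (closedBall x r)) (W (closedBall x r)))).toReal :=
  stmt12_general finrank_euclideanSpace_fin (essEq_iff_ae_eq.1 (hψD x r hr))
    (essEq_iff_ae_eq.1 (hψW x r hr)) hmeet
end
end

section
/- Let ψ : ℝⁿ → ℝⁿ be a contraction and let ε ≥ 0. If x, x′ ∈ ℝⁿ are such that L = ‖ψ(x) − ψ(x′)‖ satisfies ‖x − x′‖ ≤ L + ε, then for every t ∈ [0,1], ‖ψ((1−t)x + tx′) − ((1−t)ψ(x) + tψ(x′))‖ ≤ √(ε(2L + ε)). -/
open Metric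

noncomputable section

/-!
The point at parameter `t` of a segment of length `D` lies at distances `t * D` and `(1 - t) * D`
from the endpoints, and a contraction does not increase these. Stewart's theorem in the triangle
formed by its image and the images of the endpoints, which are `L` apart, then bounds the squared
distance to the corresponding point of the opposite side by `t * (1 - t) * (D ^ 2 - L ^ 2)`.
-/

open AffineMap

section Stewart

variable {V P : Type*} [SeminormedAddCommGroup V] [InnerProductSpace ℝ V] [PseudoMetricSpace P]
  [NormedAddTorsor V P]

theorem norm_one_sub_smul_add_smul_sq (u v : V) (t : ℝ) :
    ‖(1 - t) • u + t • v‖ ^ 2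
      = (1 - t) * ‖u‖ ^ 2 + t * ‖v‖ ^ 2 - t * (1 - t) * ‖u - v‖ ^ 2 := by
  simp only [norm_add_sq_real, norm_sub_sq_real, norm_smul, mul_pow, Real.norm_eq_abs, sq_abs,
    real_inner_smul_left, real_inner_smul_right]
  ring

theorem dist_lineMap_sq (p a b : P) (t : ℝ) :
    dist p (lineMap a b t) ^ 2
      = (1 - t) * dist p a ^ 2 + t * dist p b ^ 2 - t * (1 - t) * dist a b ^ 2 := by
  have hp : lineMap a b t -ᵥ p = (1 - t) • (a -ᵥ p) + t • (b -ᵥ p) := by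
    rw [← lineMap_apply_module, lineMap_vsub]
  rw [dist_comm p, dist_comm p, dist_comm p, dist_eq_norm_vsub V, dist_eq_norm_vsub V a p,
    dist_eq_norm_vsub V b p, dist_eq_norm_vsub V a b, hp, norm_one_sub_smul_add_smul_sq,
    vsub_sub_vsub_cancel_right]

theorem dist_lineMap_sq_le {p a b : P} {t r : ℝ} (ht : t ∈ Set.Icc (0 : ℝ) 1)
    (ha : dist p a ≤ t * r) (hb : dist p b ≤ (1 - t) * r) :
    dist p (lineMap a b t) ^ 2 ≤ t * (1 - t) * (r ^ 2 - dist a b ^ 2) := by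
  have ht₀ : 0 ≤ t := ht.1
  have ht₁ : 0 ≤ 1 - t := sub_nonneg.2 ht.2
  calc dist p (lineMap a b t) ^ 2
      = (1 - t) * dist p a ^ 2 + t * dist p b ^ 2 - t * (1 - t) * dist a b ^ 2 :=
        dist_lineMap_sq p a b t
    _ ≤ (1 - t) * (t * r) ^ 2 + t * ((1 - t) * r) ^ 2 - t * (1 - t) * dist a b ^ 2 := by gcongr
    _ = t * (1 - t) * (r ^ 2 - dist a b ^ 2) := by ring

end Stewart

theorem dist_map_lineMap_sq_le {E P F Q : Type*} [SeminormedAddCommGroup E] [NormedSpace ℝ E]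
    [PseudoMetricSpace P] [NormedAddTorsor E P] [SeminormedAddCommGroup F]
    [InnerProductSpace ℝ F] [PseudoMetricSpace Q] [NormedAddTorsor F Q] {K : NNReal} {f : P → Q}
    {x y : P} (hf : LipschitzOnWith K f (affineSegment ℝ x y)) {t : ℝ}
    (ht : t ∈ Set.Icc (0 : ℝ) 1) :
    dist (f (lineMap x y t)) (lineMap (f x) (f y) t) ^ 2
      ≤ t * (1 - t) * ((K * dist x y) ^ 2 - dist (f x) (f y) ^ 2) := by
  have hz : lineMap x y t ∈ affineSegment ℝ x y := Set.mem_image_of_mem _ ht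
  refine dist_lineMap_sq_le ht ?_ ?_
  · calc dist (f (lineMap x y t)) (f x)
        ≤ K * dist (lineMap x y t) x := hf.dist_le_mul _ hz _ (left_mem_affineSegment ℝ x y)
      _ = t * (K * dist x y) := by
        rw [dist_lineMap_left, Real.norm_of_nonneg ht.1, mul_left_comm]
  · calc dist (f (lineMap x y t)) (f y)
        ≤ K * dist (lineMap x y t) y := hf.dist_le_mul _ hz _ (right_mem_affineSegment ℝ x y)
      _ = (1 - t) * (K * dist x y) := by
        rw [dist_lineMap_right, Real.norm_of_nonneg (sub_nonneg.2 ht.2), mul_left_comm]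

theorem stmt13_general {E F : Type*} [SeminormedAddCommGroup E] [NormedSpace ℝ E]
    [SeminormedAddCommGroup F] [InnerProductSpace ℝ F] {ψ : E → F} {x x' : E}
    (hψ : LipschitzOnWith 1 ψ (segment ℝ x x')) {ε L : ℝ} (hL : L = ‖ψ x - ψ x'‖)
    (hxx' : ‖x - x'‖ ≤ L + ε) {t : ℝ} (ht : t ∈ Set.Icc (0 : ℝ) 1) :
    ‖ψ ((1 - t) • x + t • x') - ((1 - t) • ψ x + t • ψ x')‖ ≤
      Real.sqrt (ε * (2 * L + ε)) / 2 := by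
  have hL₀ : 0 ≤ L := hL ▸ norm_nonneg _
  have hLx : L ≤ ‖x - x'‖ := by
    simpa [hL, dist_eq_norm] using
      hψ.dist_le_mul _ (left_mem_segment ℝ x x') _ (right_mem_segment ℝ x x')
  have hdefect : 0 ≤ ‖x - x'‖ ^ 2 - L ^ 2 := sub_nonneg.2 (by gcongr)
  have hsq : ‖ψ ((1 - t) • x + t • x') - ((1 - t) • ψ x + t • ψ x')‖ ^ 2
      ≤ t * (1 - t) * (‖x - x'‖ ^ 2 - L ^ 2) := by
    rw [← affineSegment_eq_segment] at hψ
    simpa only [lineMap_apply_module, dist_eq_norm, ← hL, NNReal.coe_one, one_mul] using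
      dist_map_lineMap_sq_le hψ ht
  have ht₄ : t * (1 - t) ≤ 1 / 4 := by linarith [sq_nonneg (t - 1 / 2)]
  rw [le_div_iff₀ two_pos]
  apply Real.le_sqrt_of_sq_le
  calc (‖ψ ((1 - t) • x + t • x') - ((1 - t) • ψ x + t • ψ x')‖ * 2) ^ 2
      = ‖ψ ((1 - t) • x + t • x') - ((1 - t) • ψ x + t • ψ x')‖ ^ 2 * 4 := by ring
    _ ≤ 1 / 4 * (‖x - x'‖ ^ 2 - L ^ 2) * 4 := by grw [hsq, ht₄]
    _ ≤ 1 / 4 * ((L + ε) ^ 2 - L ^ 2) * 4 := by gcongr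
    _ = ε * (2 * L + ε) := by ring

/-- Lemma 7.4: if a contraction `ψ` does not decrease the distance between `x` and `x′` by
more than `ε`, then on the segment `[x, x′]` it is within `√(ε(2L + ε))` of the affine map
interpolating `ψ(x)` and `ψ(x′)`. -/
theorem stmt13 {n : ℕ} (ψ : Euc n → Euc n) (hψ : LipschitzWith 1 ψ)
    (ε : ℝ) (hε : 0 ≤ ε) (x x' : Euc n) (L : ℝ)
    (hL : L = ‖ψ x - ψ x'‖) (hxx' : ‖x - x'‖ ≤ L + ε) :
    ∀ t ∈ Set.Icc (0 : ℝ) 1,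
      ‖ψ ((1 - t) • x + t • x') - ((1 - t) • ψ x + t • ψ x')‖ ≤
        Real.sqrt (ε * (2 * L + ε)) := by
  exact fun t ht => (stmt13_general hψ.lipschitzOnWith hL hxx' ht).trans
    (half_le_self (Real.sqrt_nonneg _))
end
end
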